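/- Let Δ > 0, let X, Y be real n₁×n₂ matrices, let (i₁,j₁),…,(i_{m'},j_{m'}) be i.i.d. indices uniformly distributed on [n₁]×[n₂], and let τ₁,…,τ_{m'} be i.i.d. uniform on [-Δ/2, Δ/2], independent of the indices. Then E[ Σ_{k=1}^{m'} |Q_Δ(X_{i_k,j_k} + τ_k) - Q_Δ(Y_{i_k,j_k} + τ_k)| ] = (m'/(n₁n₂)) ‖X - Y‖₁. -/

import Mathlib

open MeasureTheory ProbabilityTheory

/-- The uniform quantizer `Q_Δ(t) = Δ(⌊t/Δ⌋ + 1/2)`. -/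
noncomputable def uniformQuantizer (Δ : ℝ) (t : ℝ) : ℝ :=
  Δ * ((⌊t / Δ⌋ : ℤ) + 1 / 2)

/-- The uniform probability measure on the interval `[-Δ/2, Δ/2]`. -/
noncomputable def uniformDither (Δ : ℝ) : Measure ℝ :=
  (ENNReal.ofReal Δ)⁻¹ • volume.restrict (Set.Icc (-(Δ / 2)) (Δ / 2))

/-- The uniform probability measure on the finite index set `Fin n₁ × Fin n₂`. -/
noncomputable def uniformIndex (n₁ n₂ : ℕ) : Measure (Fin n₁ × Fin n₂) :=
  ((n₁ * n₂ : ℕ) : ENNReal)⁻¹ • Measure.count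

/-- The entrywise ℓ₁-norm of a real matrix. -/
noncomputable def matL1 {n₁ n₂ : ℕ} (X : Matrix (Fin n₁) (Fin n₂) ℝ) : ℝ :=
  ∑ i, ∑ j, |X i j|

/-! Dithered quantization is unbiased: the error `Q_Δ(t) - t` is `Δ`-periodic and has mean zero over
a period, so `E[Q_Δ(a + τ)] = a`. Since `Q_Δ` is monotone, `Q_Δ(a + τ) - Q_Δ(b + τ)` has the sign of
`a - b` for every `τ`, so the absolute value commutes with the expectation over the dither and
`E|Q_Δ(a + τ) - Q_Δ(b + τ)| = |a - b|`. Averaging over the indices is Fubini's theorem. -/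

theorem measurable_uniformQuantizer (Δ : ℝ) : Measurable (uniformQuantizer Δ) := by
  unfold uniformQuantizer
  fun_prop

theorem monotone_uniformQuantizer {Δ : ℝ} (hΔ : 0 ≤ Δ) : Monotone (uniformQuantizer Δ) := by
  intro s t hst
  unfold uniformQuantizer
  gcongr

theorem periodic_uniformQuantizer_sub_self {Δ : ℝ} (hΔ : Δ ≠ 0) :
    Function.Periodic (fun t ↦ uniformQuantizer Δ t - t) Δ := by
  intro t
  simp only [uniformQuantizer, add_div, div_self hΔ, Int.floor_add_one]
  push_cast
  ring

theorem uniformQuantizer_eq_half {Δ t : ℝ} (ht : t ∈ Set.Ico 0 Δ) :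
    uniformQuantizer Δ t = Δ / 2 := by
  have hΔ : 0 < Δ := ht.1.trans_lt ht.2
  have hfloor : ⌊t / Δ⌋ = 0 :=
    Int.floor_eq_zero_iff.2 ⟨div_nonneg ht.1 hΔ.le, (div_lt_one hΔ).2 ht.2⟩
  simp only [uniformQuantizer, hfloor, Int.cast_zero]
  ring

theorem intervalIntegral_uniformQuantizer_sub_self {Δ : ℝ} (hΔ : 0 < Δ) (s : ℝ) :
    ∫ t in s..s + Δ, (uniformQuantizer Δ t - t) = 0 := by
  calc ∫ t in s..s + Δ, (uniformQuantizer Δ t - t)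
      = ∫ t in 0..0 + Δ, (uniformQuantizer Δ t - t) :=
        (periodic_uniformQuantizer_sub_self hΔ.ne').intervalIntegral_add_eq s 0
    _ = ∫ t in 0..Δ, (Δ / 2 - t) := by
        rw [zero_add]
        refine intervalIntegral.integral_congr_Ioo_of_le hΔ.le fun t ht ↦ ?_
        simp only [uniformQuantizer_eq_half (Set.Ioo_subset_Ico_self ht)]
    _ = 0 := by
        rw [intervalIntegral.integral_sub (by simp) (by simp)]
        simp only [intervalIntegral.integral_const, integral_id, smul_eq_mul]
        ring

theorem intervalIntegral_uniformQuantizer {Δ : ℝ} (hΔ : 0 < Δ) (s : ℝ) :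
    ∫ t in s..s + Δ, uniformQuantizer Δ t = Δ * (s + Δ / 2) := by
  have hQ : IntervalIntegrable (uniformQuantizer Δ) volume s (s + Δ) :=
    (monotone_uniformQuantizer hΔ.le).intervalIntegrable
  have herror := intervalIntegral_uniformQuantizer_sub_self hΔ s
  rw [intervalIntegral.integral_sub hQ intervalIntegral.intervalIntegrable_id, integral_id]
    at herror
  linarith

instance isFiniteMeasure_uniformDither (Δ : ℝ) : IsFiniteMeasure (uniformDither Δ) where
  measure_univ_lt_top := by
    have hvolume : volume (Set.Icc (-(Δ / 2)) (Δ / 2)) = ENNReal.ofReal Δ := by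
      rw [Real.volume_Icc, sub_neg_eq_add, add_halves]
    simpa [uniformDither, hvolume] using
      (ENNReal.inv_mul_le_one (ENNReal.ofReal Δ)).trans_lt ENNReal.one_lt_top

theorem integral_uniformDither {E : Type*} [NormedAddCommGroup E] [NormedSpace ℝ E]
    {Δ : ℝ} (hΔ : 0 ≤ Δ) (f : ℝ → E) :
    ∫ t, f t ∂uniformDither Δ = Δ⁻¹ • ∫ t in (-(Δ / 2))..(Δ / 2), f t := by
  rw [uniformDither, integral_smul_measure, integral_Icc_eq_integral_Ioc,
    ← intervalIntegral.integral_of_le (by linarith), ENNReal.toReal_inv,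
    ENNReal.toReal_ofReal hΔ]

theorem integrable_uniformQuantizer_add {Δ : ℝ} (hΔ : 0 < Δ) (a : ℝ) :
    Integrable (fun t ↦ uniformQuantizer Δ (a + t)) (uniformDither Δ) := by
  have hmono : Monotone fun t ↦ uniformQuantizer Δ (a + t) := fun _ _ h ↦
    monotone_uniformQuantizer hΔ.le (add_le_add_right h a)
  have hIcc : IntegrableOn (fun t ↦ uniformQuantizer Δ (a + t)) (Set.Icc (-(Δ / 2)) (Δ / 2)) :=
    (hmono.monotoneOn _).integrableOn_isCompact isCompact_Icc
  exact hIcc.integrable.smul_measure (by simp [hΔ])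

theorem integral_uniformQuantizer_add {Δ : ℝ} (hΔ : 0 < Δ) (a : ℝ) :
    ∫ t, uniformQuantizer Δ (a + t) ∂uniformDither Δ = a := by
  rw [integral_uniformDither hΔ.le, intervalIntegral.integral_comp_add_left,
    show a + Δ / 2 = a + -(Δ / 2) + Δ by ring, intervalIntegral_uniformQuantizer hΔ,
    neg_add_cancel_right, smul_eq_mul, inv_mul_cancel_left₀ hΔ.ne']

theorem integral_abs_uniformQuantizer_add_sub {Δ : ℝ} (hΔ : 0 < Δ) (a b : ℝ) :
    ∫ t, |uniformQuantizer Δ (a + t) - uniformQuantizer Δ (b + t)| ∂uniformDither Δ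
      = |a - b| := by
  wlog hba : b ≤ a generalizing a b
  · simpa only [abs_sub_comm] using this b a (le_of_not_ge hba)
  have hle (t : ℝ) : uniformQuantizer Δ (b + t) ≤ uniformQuantizer Δ (a + t) :=
    monotone_uniformQuantizer hΔ.le (add_le_add_left hba t)
  simp only [abs_of_nonneg (sub_nonneg.2 (hle _)), abs_of_nonneg (sub_nonneg.2 hba)]
  rw [integral_sub (integrable_uniformQuantizer_add hΔ a) (integrable_uniformQuantizer_add hΔ b),
    integral_uniformQuantizer_add hΔ, integral_uniformQuantizer_add hΔ]

section RandomIndex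

variable {α : Type*} [MeasurableSpace α] {μ : Measure α} {x y : α → ℝ} {Δ : ℝ}

theorem aestronglyMeasurable_abs_uniformQuantizer_sub (hx : AEMeasurable x μ)
    (hy : AEMeasurable y μ) :
    AEStronglyMeasurable
      (fun w : α × ℝ ↦ |uniformQuantizer Δ (x w.1 + w.2) - uniformQuantizer Δ (y w.1 + w.2)|)
      (μ.prod (uniformDither Δ)) := by
  have hQ {z : α → ℝ} (hz : AEMeasurable z μ) :
      AEMeasurable (fun w : α × ℝ ↦ uniformQuantizer Δ (z w.1 + w.2))
        (μ.prod (uniformDither Δ)) :=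
    (measurable_uniformQuantizer Δ).comp_aemeasurable (hz.comp_fst.add measurable_snd.aemeasurable)
  exact ((hQ hx).sub (hQ hy)).abs.aestronglyMeasurable

theorem integrable_abs_uniformQuantizer_sub (hΔ : 0 < Δ) (hx : AEMeasurable x μ)
    (hy : AEMeasurable y μ) (hxy : Integrable (fun a ↦ x a - y a) μ) :
    Integrable
      (fun w : α × ℝ ↦ |uniformQuantizer Δ (x w.1 + w.2) - uniformQuantizer Δ (y w.1 + w.2)|)
      (μ.prod (uniformDither Δ)) := by
  refine (integrable_prod_iff (aestronglyMeasurable_abs_uniformQuantizer_sub hx hy)).2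
    ⟨.of_forall fun a ↦ ?_, ?_⟩
  · exact ((integrable_uniformQuantizer_add hΔ (x a)).sub
      (integrable_uniformQuantizer_add hΔ (y a))).abs
  · simpa only [Real.norm_eq_abs, abs_abs, integral_abs_uniformQuantizer_add_sub hΔ] using hxy.abs

theorem integral_prod_abs_uniformQuantizer_sub [SFinite μ] (hΔ : 0 < Δ) (hx : AEMeasurable x μ)
    (hy : AEMeasurable y μ) (hxy : Integrable (fun a ↦ x a - y a) μ) :
    ∫ w : α × ℝ, |uniformQuantizer Δ (x w.1 + w.2) - uniformQuantizer Δ (y w.1 + w.2)|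
        ∂μ.prod (uniformDither Δ)
      = ∫ a, |x a - y a| ∂μ := by
  rw [integral_prod _ (integrable_abs_uniformQuantizer_sub hΔ hx hy hxy)]
  simp only [integral_abs_uniformQuantizer_add_sub hΔ]

end RandomIndex

theorem integral_sum_comp_of_map_eq {ι Ω β E : Type*} [Fintype ι] [MeasurableSpace Ω]
    [MeasurableSpace β] [NormedAddCommGroup E] [NormedSpace ℝ E] {P : Measure Ω} {ν : Measure β}
    {W : ι → Ω → β} (hW : ∀ k, AEMeasurable (W k) P) (hmap : ∀ k, P.map (W k) = ν)
    {f : β → E} (hf : Integrable f ν) :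
    ∫ ω, ∑ k, f (W k ω) ∂P = Fintype.card ι • ∫ w, f w ∂ν := by
  have hf' (k : ι) : Integrable f (P.map (W k)) := (hmap k).symm ▸ hf
  have hfW (k : ι) : Integrable (fun ω ↦ f (W k ω)) P := (hf' k).comp_aemeasurable (hW k)
  rw [integral_finsetSum _ fun k _ ↦ hfW k]
  simp only [← integral_map (hW _) (hf' _).aestronglyMeasurable, hmap, Finset.sum_const,
    Finset.card_univ]

theorem sampled_quantized_l1_expectation_general {ι α Ω : Type*} [Fintype ι] [MeasurableSpace α]
    [MeasurableSpace Ω] {Δ : ℝ} (hΔ : 0 < Δ) {μ : Measure α} [SFinite μ] {x y : α → ℝ}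
    (hx : AEMeasurable x μ) (hy : AEMeasurable y μ) (hxy : Integrable (fun a ↦ x a - y a) μ)
    {P : Measure Ω} {W : ι → Ω → α × ℝ} (hmeas : ∀ k, AEMeasurable (W k) P)
    (hdist : ∀ k, P.map (W k) = μ.prod (uniformDither Δ)) :
    ∫ ω, ∑ k, |uniformQuantizer Δ (x (W k ω).1 + (W k ω).2)
        - uniformQuantizer Δ (y (W k ω).1 + (W k ω).2)| ∂P
      = Fintype.card ι * ∫ a, |x a - y a| ∂μ := by
  rw [integral_sum_comp_of_map_eq hmeas hdist (integrable_abs_uniformQuantizer_sub hΔ hx hy hxy),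
    integral_prod_abs_uniformQuantizer_sub hΔ hx hy hxy, nsmul_eq_mul]

instance isFiniteMeasure_uniformIndex (n₁ n₂ : ℕ) : IsFiniteMeasure (uniformIndex n₁ n₂) where
  measure_univ_lt_top := by
    simpa [uniformIndex] using
      (ENNReal.inv_mul_le_one ((n₁ * n₂ : ℕ) : ENNReal)).trans_lt ENNReal.one_lt_top

theorem integral_uniformIndex_abs_sub {n₁ n₂ : ℕ} (X Y : Matrix (Fin n₁) (Fin n₂) ℝ) :
    ∫ p, |X p.1 p.2 - Y p.1 p.2| ∂uniformIndex n₁ n₂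
      = ((n₁ : ℝ) * n₂)⁻¹ * matL1 (X - Y) := by
  rw [uniformIndex, integral_smul_measure, integral_count, Fintype.sum_prod_type,
    ENNReal.toReal_inv, ENNReal.toReal_natCast, Nat.cast_mul, smul_eq_mul]
  simp only [matL1, Matrix.sub_apply]

/-- Unbiasedness of the sampled quantized ℓ₁ distance: with i.i.d. uniform indices
`(i_k,j_k)` and i.i.d. uniform dithers `τ_k` independent of the indices (encoded by the
i.i.d. family `W k = ((i_k,j_k), τ_k)` with product distribution),
`E[Σ_k |Q_Δ(X_{i_k,j_k}+τ_k) - Q_Δ(Y_{i_k,j_k}+τ_k)|] = (m'/(n₁n₂)) ‖X - Y‖₁`. -/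
theorem sampled_quantized_l1_expectation {n₁ n₂ m' : ℕ} (hn₁ : 0 < n₁) (hn₂ : 0 < n₂)
    (Δ : ℝ) (hΔ : 0 < Δ)
    (X Y : Matrix (Fin n₁) (Fin n₂) ℝ)
    {Ω : Type*} [MeasurableSpace Ω] (P : Measure Ω) [IsProbabilityMeasure P]
    (W : Fin m' → Ω → (Fin n₁ × Fin n₂) × ℝ)
    (hmeas : ∀ k, Measurable (W k))
    (hindep : iIndepFun W P)
    (hdist : ∀ k, Measure.map (W k) P = (uniformIndex n₁ n₂).prod (uniformDither Δ)) :
    ∫ ω, (∑ k : Fin m',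
        |uniformQuantizer Δ (X (W k ω).1.1 (W k ω).1.2 + (W k ω).2)
          - uniformQuantizer Δ (Y (W k ω).1.1 (W k ω).1.2 + (W k ω).2)|) ∂P
      = ((m' : ℝ) / ((n₁ : ℝ) * n₂)) * matL1 (X - Y) := by
  rw [sampled_quantized_l1_expectation_general (x := fun p ↦ X p.1 p.2) (y := fun p ↦ Y p.1 p.2)
    hΔ .of_discrete .of_discrete .of_finite (hmeas · |>.aemeasurable) hdist,
    integral_uniformIndex_abs_sub, Fintype.card_fin, div_eq_mul_inv, mul_assoc]
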